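/- Let p be a prime with p ≡ 3 (mod 4). Then Σ_{k=0}^{(p+1)/4} (−1)^k (−1/4)_k^3 / k!^3 ≡ −(−1)^{(p+1)/4} · p · Σ_{k=0}^{(p+1)/4} (−1/4)_k^2 (1/2)_k / (k! (3/8)_k (7/8)_k) (mod p^2). -/

import Mathlib

open Finset

/-- The Pochhammer symbol `(a)_k = a(a+1)⋯(a+k-1)` for rational `a`. -/
def poch (a : ℚ) (k : ℕ) : ℚ := ∏ j ∈ Finset.range k, (a + j)

theorem poch_zero (a : ℚ) : poch a 0 = 1 := by simp [poch]

theorem poch_succ (a : ℚ) (k : ℕ) : poch a (k + 1) = poch a k * (a + k) := by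
  simp [poch, Finset.prod_range_succ]

theorem poch_succ' (a : ℚ) (k : ℕ) : poch a (k + 1) = a * poch (a + 1) k := by
  unfold poch
  rw [Finset.prod_range_succ']
  rw [mul_comm]
  congr 1
  · simp
  · apply Finset.prod_congr rfl
    intro j _
    push_cast; ring

theorem poch_add (a : ℚ) (k l : ℕ) : poch a (k + l) = poch a k * poch (a + k) l := by
  unfold poch
  rw [Finset.prod_range_add]
  congr 1
  apply Finset.prod_congr rfl
  intro j _
  push_cast; ring

/-- Chu-Vandermonde, polynomial form. -/
theorem chuV (N : ℕ) : ∀ b c : ℚ,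
    ∑ s ∈ range (N + 1), (N.choose s : ℚ) * (-1) ^ s * poch b s * poch (c + s) (N - s)
      = poch (c - b) N := by
  induction N with
  | zero => intro b c; simp [poch]
  | succ N ih =>
    intro b c
    have h1 : ∑ s ∈ range (N + 1), (N.choose s : ℚ) * (-1) ^ s * poch b s * poch (c + s) (N + 1 - s)
        = (c + N) * poch (c - b) N := by
      rw [← ih b c, Finset.mul_sum]
      apply Finset.sum_congr rfl
      intro s hs
      have hs' : s ≤ N := by simpa [Nat.lt_succ_iff] using hs
      rw [Nat.succ_sub hs', poch_succ, Nat.cast_sub hs']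
      ring
    have h2 : ∑ s ∈ range (N + 1), (N.choose s : ℚ) * (-1) ^ (s + 1) * poch b (s + 1)
          * poch (c + (s + 1 : ℕ)) (N + 1 - (s + 1)) = - b * poch (c - b) N := by
      have := ih (b + 1) (c + 1)
      rw [show c + 1 - (b + 1) = c - b by ring] at this
      rw [← this, Finset.mul_sum]
      apply Finset.sum_congr rfl
      intro s hs
      rw [poch_succ', Nat.succ_sub_succ, show c + ((s + 1 : ℕ) : ℚ) = c + 1 + s by push_cast; ring]
      ring
    rw [Finset.sum_range_succ']
    have h3 : ∀ s ∈ range (N + 1), (((N + 1).choose (s + 1) : ℕ) : ℚ) * (-1) ^ (s + 1) * poch b (s + 1)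
          * poch (c + (s + 1 : ℕ)) (N + 1 - (s + 1)) =
        (N.choose s : ℚ) * (-1) ^ (s + 1) * poch b (s + 1)
          * poch (c + (s + 1 : ℕ)) (N + 1 - (s + 1)) +
        (N.choose (s + 1) : ℚ) * (-1) ^ (s + 1) * poch b (s + 1)
          * poch (c + (s + 1 : ℕ)) (N + 1 - (s + 1)) := by
      intro s _
      rw [Nat.choose_succ_succ]; push_cast; ring
    rw [Finset.sum_congr rfl h3, Finset.sum_add_distrib, h2]
    have h4 := Finset.sum_range_succ' (fun s => (N.choose s : ℚ) * (-1) ^ s * poch b s * poch (c + s) (N + 1 - s)) (N + 1)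
    rw [Finset.sum_range_succ, h1] at h4
    simp only [Nat.choose_succ_self, Nat.cast_zero, zero_mul, add_zero] at h4
    rw [poch_succ]
    simp only [Nat.choose_zero_right, Nat.cast_one, Nat.cast_zero, add_zero] at h4 ⊢
    linear_combination -h4

theorem poch_neg (N s : ℕ) : s ≤ N → poch (-(N : ℚ)) s = (-1) ^ s * (s.factorial : ℚ) * (N.choose s : ℚ) := by
  induction s with
  | zero => simp [poch]
  | succ s ih =>
    intro h
    rw [poch_succ, ih (by omega)]
    have := Nat.choose_succ_right_eq N s
    have h2 : (N.choose (s + 1) : ℚ) * (s + 1) = N.choose s * (N - s) := by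
      rw [← Nat.cast_sub (by omega : s ≤ N)]; exact_mod_cast this
    rw [Nat.factorial_succ]; push_cast
    linear_combination (-1) ^ s * (s.factorial : ℚ) * h2

theorem chuV2 (N : ℕ) (b c : ℚ) (hc : ∀ k, poch c k ≠ 0) :
    ∑ s ∈ range (N + 1), poch b s * poch (-(N : ℚ)) s / ((s.factorial : ℚ) * poch c s)
      = poch (c - b) N / poch c N := by
  rw [eq_div_iff (hc N), ← chuV N b c, Finset.sum_mul]
  apply Finset.sum_congr rfl
  intro s hs
  have hs' : s ≤ N := by simpa [Nat.lt_succ_iff] using hs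
  rw [poch_neg N s hs']
  have h1 := poch_add c s (N - s)
  rw [Nat.add_sub_cancel' hs'] at h1
  rw [h1]
  have := hc s
  have h3 : (s.factorial : ℚ) ≠ 0 := by exact_mod_cast s.factorial_ne_zero
  field_simp

theorem poch_shift_ne {a : ℚ} (h : ∀ k, poch a k ≠ 0) (m : ℕ) : ∀ k, poch (a + m) k ≠ 0 := by
  intro k hk
  apply h (m + k)
  rw [poch_add, hk, mul_zero]

theorem poch_half (m : ℕ) : poch (1 + m) m = 4 ^ m * poch (1/2) m := by
  have h : ∀ m : ℕ, (m.factorial : ℚ) * 4 ^ m * poch (1/2) m = ((2 * m).factorial : ℚ) := by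
    intro m
    induction m with
    | zero => simp [poch]
    | succ m ih =>
      rw [show 2 * (m + 1) = 2 * m + 1 + 1 by ring, Nat.factorial_succ, Nat.factorial_succ,
        Nat.factorial_succ, poch_succ]
      push_cast
      rw [← ih]; ring
  have h1 : ∀ m : ℕ, poch 1 m = m.factorial := by
    intro m
    induction m with
    | zero => simp [poch]
    | succ m ih => rw [poch_succ, ih, Nat.factorial_succ]; push_cast; ring
  have h2 := poch_add 1 m m
  rw [h1, h1, ← two_mul, ← h] at h2
  have h3 : (m.factorial : ℚ) ≠ 0 := by exact_mod_cast m.factorial_ne_zero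
  apply mul_left_cancel₀ h3
  rw [← h2]; ring

/-- the pair (alpha, beta) -/
theorem beta_eq (a : ℚ) (ha : ∀ k, poch (1 + a) k ≠ 0) (m : ℕ) :
    ∑ r ∈ range (m + 1), (-1) ^ r * poch a r / ((r.factorial : ℚ) * ((m - r).factorial : ℚ)
      * poch (1 + a) (m + r)) = 4 ^ m * poch (1/2) m / ((m.factorial : ℚ) * poch (1 + a) (2 * m)) := by
  have h := chuV2 m a (1 + a + m) (poch_shift_ne ha m)
  rw [show 1 + a + m - a = (1 + m : ℚ) by ring, poch_half] at h
  have hm : (m.factorial : ℚ) ≠ 0 := by exact_mod_cast m.factorial_ne_zero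
  have e : 4 ^ m * poch (1/2) m / ((m.factorial : ℚ) * poch (1 + a) (2 * m))
      = 4 ^ m * poch (1/2) m / poch (1 + a + m) m / (m.factorial * poch (1 + a) m) := by
    rw [two_mul, poch_add]
    have := ha m
    have := poch_shift_ne ha m m
    field_simp
  rw [e, ← h, Finset.sum_div]
  apply Finset.sum_congr rfl
  intro r hr
  have hr' : r ≤ m := by simpa [Nat.lt_succ_iff] using hr
  rw [poch_neg m r hr', poch_add, Nat.cast_choose ℚ hr']
  have h1 := ha m
  have h2 := poch_shift_ne ha m r
  have h3 : (r.factorial : ℚ) ≠ 0 := by exact_mod_cast r.factorial_ne_zero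
  have h4 : ((m - r).factorial : ℚ) ≠ 0 := by exact_mod_cast (m - r).factorial_ne_zero
  field_simp

theorem gamma_eq (a d : ℚ) (ha : ∀ k, poch (1 + a) k ≠ 0) (hd : ∀ k, poch (1 + a - d) k ≠ 0)
    (n r : ℕ) (hr : r ≤ n) :
    ∑ s ∈ range (n + 1 - r), poch d (r + s) * poch (-(n : ℚ)) (r + s) /
      ((s.factorial : ℚ) * poch (1 + a) (r + s + r)) =
    poch d r * poch (-(n : ℚ)) r * poch (1 + a - d) n /
      (poch (1 + a - d) r * poch (1 + a) n * poch (1 + a + n) r) := by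
  obtain ⟨N, rfl⟩ := Nat.exists_eq_add_of_le hr
  have h := chuV2 N (d + r) (1 + a + (2 * r : ℕ)) (poch_shift_ne ha (2 * r))
  rw [show r + N + 1 - r = N + 1 by omega]
  have h1 : ∀ s ∈ range (N + 1), poch d (r + s) * poch (-((r + N : ℕ) : ℚ)) (r + s) /
      ((s.factorial : ℚ) * poch (1 + a) (r + s + r)) =
      poch d r * poch (-((r + N : ℕ) : ℚ)) r / poch (1 + a) (2 * r) *
      (poch (d + r) s * poch (-(N : ℚ)) s / ((s.factorial : ℚ) * poch (1 + a + (2 * r : ℕ)) s)) := by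
    intro s _
    rw [poch_add d, poch_add (-((r + N : ℕ) : ℚ)), show r + s + r = 2 * r + s by ring,
      poch_add (1 + a), show -((r + N : ℕ) : ℚ) + r = -(N : ℚ) by push_cast; ring]
    have := ha (2 * r)
    have := poch_shift_ne ha (2 * r) s
    have h3 : (s.factorial : ℚ) ≠ 0 := by exact_mod_cast s.factorial_ne_zero
    field_simp
  rw [Finset.sum_congr rfl h1, ← Finset.mul_sum, h]
  have e1 : poch (1 + a) (r + N) * poch (1 + a + (r + N : ℕ)) r
      = poch (1 + a) (2 * r) * poch (1 + a + (2 * r : ℕ)) N := by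
    rw [← poch_add, ← poch_add]; congr 1; ring
  have e2 : poch (1 + a - d) (r + N) = poch (1 + a - d) r * poch (1 + a + (2 * r : ℕ) - (d + r)) N := by
    rw [poch_add]; congr 2; push_cast; ring
  rw [mul_assoc (poch (1 + a - d) r), e1, e2]
  have := ha (2 * r)
  have := poch_shift_ne ha (2 * r) N
  have := hd r
  field_simp

theorem main_id (a d : ℚ) (ha : ∀ k, poch (1 + a) k ≠ 0) (hd : ∀ k, poch (1 + a - d) k ≠ 0) (n : ℕ) :
    ∑ r ∈ range (n + 1), (-1) ^ r * poch a r * poch d r * poch (-(n : ℚ)) r /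
      ((r.factorial : ℚ) * poch (1 + a - d) r * poch (1 + a + n) r) =
    poch (1 + a) n / poch (1 + a - d) n *
    ∑ m ∈ range (n + 1), poch d m * poch (-(n : ℚ)) m * (4 ^ m * poch (1/2) m /
      ((m.factorial : ℚ) * poch (1 + a) (2 * m))) := by
  have h1 : ∀ m ∈ range (n + 1), poch d m * poch (-(n : ℚ)) m * (4 ^ m * poch (1/2) m /
      ((m.factorial : ℚ) * poch (1 + a) (2 * m))) =
      ∑ r ∈ range (m + 1), (fun r s => (-1) ^ r * poch a r / (r.factorial : ℚ) *
        (poch d (r + s) * poch (-(n : ℚ)) (r + s) /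
      ((s.factorial : ℚ) * poch (1 + a) (r + s + r)))) r (m - r) := by
    intro m _
    rw [← beta_eq a ha, Finset.mul_sum]
    apply Finset.sum_congr rfl
    intro r hr
    have hr' : r ≤ m := by simpa [Nat.lt_succ_iff] using hr
    simp only [Nat.add_sub_cancel' hr']
    have := ha (m + r)
    have h3 : (r.factorial : ℚ) ≠ 0 := by exact_mod_cast r.factorial_ne_zero
    have h4 : ((m - r).factorial : ℚ) ≠ 0 := by exact_mod_cast (m - r).factorial_ne_zero
    field_simp
  rw [Finset.sum_congr rfl h1]
  rw [Finset.sum_range_diag_flip (n + 1) (fun r s => (-1) ^ r * poch a r / (r.factorial : ℚ) *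
        (poch d (r + s) * poch (-(n : ℚ)) (r + s) /
      ((s.factorial : ℚ) * poch (1 + a) (r + s + r))))]
  rw [Finset.mul_sum]
  apply Finset.sum_congr rfl
  intro r hr
  have hr' : r ≤ n := by simpa [Nat.lt_succ_iff] using hr
  rw [← Finset.mul_sum, gamma_eq a d ha hd n r hr']
  have := ha n
  have := hd n
  have := hd r
  have := poch_shift_ne ha n r
  have h3 : (r.factorial : ℚ) ≠ 0 := by exact_mod_cast r.factorial_ne_zero
  field_simp

theorem poch_pair (k : ℕ) : poch (3/8) k * poch (7/8) k * 4 ^ k = poch (3/4) (2 * k) := by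
  induction k with
  | zero => simp [poch]
  | succ k ih =>
    rw [show 2 * (k + 1) = 2 * k + 1 + 1 by ring]
    simp only [poch_succ]
    rw [← ih]; push_cast; ring

theorem prefactor (n : ℕ) (hn : 1 ≤ n) (x : ℚ) (hx : (n : ℚ) = x + 1/4)
   (h : ∀ k, poch (1 - x) k ≠ 0) :
    poch (3/4) n / poch (1 - x) n = -(-1) ^ n * (4 * x) := by
  obtain ⟨m, rfl⟩ := Nat.exists_eq_add_of_le' hn
  rw [div_eq_iff (h _)]
  have h1 : poch (3/4) m = (-1) ^ m * poch (1 - x) m := by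
    unfold poch
    rw [← Finset.prod_range_reflect, ← Finset.card_range m, ← Finset.prod_const, Finset.card_range,
      ← Finset.prod_mul_distrib]
    apply Finset.prod_congr rfl
    intro j hj
    have hj' : j < m := by simpa using hj
    rw [Nat.sub_sub, Nat.cast_sub (by omega)]
    push_cast at hx ⊢
    linear_combination hx
  rw [poch_succ, poch_succ, h1]
  push_cast at hx
  have : (m : ℚ) = x - 3/4 := by linarith
  rw [this]; ring

/-- the p-adic norm of a rational number -/
noncomputable def nrm (p : ℕ) [Fact p.Prime] (q : ℚ) : ℝ := ‖(q : ℚ_[p])‖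

section
variable (p : ℕ) [Fact p.Prime]

theorem nrm_nonneg (a : ℚ) : 0 ≤ nrm p a := norm_nonneg _

theorem nrm_mul (a b : ℚ) : nrm p (a * b) = nrm p a * nrm p b := by
  simp [nrm]

theorem nrm_div (a b : ℚ) : nrm p (a / b) = nrm p a / nrm p b := by
  simp [nrm]

theorem nrm_pow (a : ℚ) (k : ℕ) : nrm p (a ^ k) = nrm p a ^ k := by
  simp [nrm]

theorem nrm_one : nrm p 1 = 1 := by simp [nrm]

theorem nrm_neg (a : ℚ) : nrm p (-a) = nrm p a := by simp [nrm]

theorem nrm_prod (f : ℕ → ℚ) (s : Finset ℕ) : nrm p (∏ i ∈ s, f i) = ∏ i ∈ s, nrm p (f i) := by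
  simp [nrm]

theorem nrm_add_le {a b : ℚ} {e : ℝ} (ha : nrm p a ≤ e) (hb : nrm p b ≤ e) : nrm p (a + b) ≤ e := by
  unfold nrm at *
  push_cast
  exact (Padic.nonarchimedean _ _).trans (max_le ha hb)

theorem nrm_sub_le {a b : ℚ} {e : ℝ} (ha : nrm p a ≤ e) (hb : nrm p b ≤ e) : nrm p (a - b) ≤ e := by
  rw [sub_eq_add_neg]
  exact nrm_add_le p ha (by rwa [nrm_neg])

theorem nrm_sum_le (f : ℕ → ℚ) {e : ℝ} (he : 0 ≤ e) (k : ℕ) (h : ∀ i < k, nrm p (f i) ≤ e) :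
    nrm p (∑ i ∈ range k, f i) ≤ e := by
  induction k with
  | zero => simpa [nrm] using he
  | succ k ih =>
    rw [Finset.sum_range_succ]
    exact nrm_add_le p (ih fun i hi => h i (by omega)) (h k (by omega))

theorem nrm_prod_le_one (f : ℕ → ℚ) (k : ℕ) (h : ∀ i < k, nrm p (f i) ≤ 1) :
    nrm p (∏ i ∈ range k, f i) ≤ 1 := by
  rw [nrm_prod]
  exact Finset.prod_le_one (fun i _ => nrm_nonneg p _) (fun i hi => h i (by simpa using hi))

theorem nrm_prod_sub_le (A B : ℕ → ℚ) {e : ℝ} (he : 0 ≤ e) (k : ℕ) (hA : ∀ i < k, nrm p (A i) ≤ 1)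
    (hB : ∀ i < k, nrm p (B i) ≤ 1) (hAB : ∀ i < k, nrm p (A i - B i) ≤ e) :
    nrm p (∏ i ∈ range k, A i - ∏ i ∈ range k, B i) ≤ e := by
  induction k with
  | zero => simpa [nrm] using he
  | succ k ih =>
    rw [Finset.prod_range_succ, Finset.prod_range_succ]
    rw [show (∏ i ∈ range k, A i) * A k - (∏ i ∈ range k, B i) * B k =
      (∏ i ∈ range k, A i) * (A k - B k) + (∏ i ∈ range k, A i - ∏ i ∈ range k, B i) * B k by ring]
    apply nrm_add_le
    · rw [nrm_mul]
      calc _ ≤ 1 * e := mul_le_mul (nrm_prod_le_one p A k fun i hi => hA i (by omega)) (hAB k (by omega))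
              (nrm_nonneg p _) zero_le_one
        _ = e := one_mul e
    · rw [nrm_mul]
      calc _ ≤ e * 1 := mul_le_mul (ih (fun i hi => hA i (by omega)) (fun i hi => hB i (by omega))
                (fun i hi => hAB i (by omega))) (hB k (by omega)) (nrm_nonneg p _) he
        _ = e := mul_one e

theorem nrm_int_le (z : ℤ) : nrm p z ≤ 1 := by
  unfold nrm
  have := Padic.norm_int_le_one (p := p) z
  simpa using this

theorem nrm_nat_eq {m : ℕ} (h : ¬ p ∣ m) : nrm p m = 1 := by
  unfold nrm
  have := (Padic.norm_natCast_eq_one_iff (p := p) (n := m)).2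
    ((Nat.Prime.coprime_iff_not_dvd Fact.out).2 h)
  simpa using this

theorem nrm_p : nrm p p = (p : ℝ)⁻¹ := by
  unfold nrm
  simp

theorem inv_p_lt : (p : ℝ)⁻¹ < 1 := by
  have : (1 : ℝ) < p := by exact_mod_cast (Fact.out : p.Prime).one_lt
  exact inv_lt_one_of_one_lt₀ this

theorem nrm_two (h : p % 4 = 3) : nrm p 2 = 1 := by
  have := nrm_nat_eq p (m := 2) (by
    intro hd
    have := Nat.le_of_dvd (by norm_num) hd
    omega)
  simpa using this

theorem nrm_four (h : p % 4 = 3) : nrm p 4 = 1 := by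
  rw [show (4 : ℚ) = 2 * 2 by norm_num, nrm_mul, nrm_two p h]; norm_num

theorem nrm_x (h : p % 4 = 3) : nrm p ((p : ℚ) / 4) = (p : ℝ)⁻¹ := by
  rw [nrm_div, nrm_p, nrm_four p h, div_one]

theorem nrm_quarter (h : p % 4 = 3) (j : ℕ) : nrm p (-1/4 + j) ≤ 1 := by
  rw [show (-1/4 + j : ℚ) = ((4 * j - 1 : ℤ) : ℚ) / 4 by push_cast; ring, nrm_div, nrm_four p h, div_one]
  exact nrm_int_le p _

theorem nrm_half (h : p % 4 = 3) (j : ℕ) : nrm p (1/2 + j) ≤ 1 := by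
  rw [show (1/2 + j : ℚ) = ((2 * j + 1 : ℤ) : ℚ) / 2 by push_cast; ring, nrm_div, nrm_two p h, div_one]
  exact nrm_int_le p _

theorem nrm_succ {j : ℕ} (h : j + 1 < p) : nrm p (1 + j) = 1 := by
  have := nrm_nat_eq p (m := j + 1) (by
    intro hd
    have := Nat.le_of_dvd (by omega) hd
    omega)
  rw [← this]; congr 1; push_cast; ring

theorem nrm_of_sub {u v : ℚ} (hu : nrm p u = 1) (hv : nrm p v < 1) : nrm p (u - v) = 1 := by
  have h1 : nrm p (u - v) ≤ 1 := nrm_sub_le p hu.le hv.le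
  by_contra hne
  have h2 : nrm p (u - v) < 1 := lt_of_le_of_ne h1 hne
  have h3 : nrm p ((u - v) + v) ≤ max (nrm p (u - v)) (nrm p v) :=
    nrm_add_le p (le_max_left _ _) (le_max_right _ _)
  rw [sub_add_cancel, hu] at h3
  exact absurd (max_lt h2 hv) (not_lt.2 h3)

theorem nrm_xsq (h : p % 4 = 3) : nrm p (((p : ℚ) / 4) ^ 2) = (p : ℝ) ^ (-2 : ℤ) := by
  rw [nrm_pow, nrm_x p h, zpow_neg, inv_pow]; norm_cast

theorem e_nonneg : (0 : ℝ) ≤ (p : ℝ) ^ (-2 : ℤ) := by positivity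

theorem e_lt : (p : ℝ) ^ (-2 : ℤ) < 1 := by
  have := inv_p_lt p
  rw [zpow_neg]
  have h1 : (1 : ℝ) < p := by exact_mod_cast (Fact.out : p.Prime).one_lt
  apply inv_lt_one_of_one_lt₀
  norm_cast
  exact one_lt_pow₀ (by exact_mod_cast h1) (by norm_num)

theorem poch_mul_pm (u x : ℚ) (k : ℕ) :
    poch (u + x) k * poch (u - x) k = ∏ j ∈ range k, ((u + j) ^ 2 - x ^ 2) := by
  unfold poch
  rw [← Finset.prod_mul_distrib]
  apply Finset.prod_congr rfl
  intro j _
  ring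

theorem fact_eq (k : ℕ) : (k.factorial : ℚ) = ∏ j ∈ range k, (1 + j : ℚ) := by
  rw [← Finset.prod_range_add_one_eq_factorial]
  push_cast
  exact Finset.prod_congr rfl fun j _ => by ring

theorem nrm_fact {k : ℕ} (hk : k < p) : nrm p (k.factorial : ℚ) = 1 := by
  rw [fact_eq, nrm_prod]
  apply Finset.prod_eq_one
  intro j hj
  have : j < k := by simpa using hj
  exact nrm_succ p (by omega)

theorem nrm_poch_quarter (h : p % 4 = 3) (k : ℕ) : nrm p (poch (-1/4) k) ≤ 1 :=
  nrm_prod_le_one p _ k fun j _ => nrm_quarter p h j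

theorem nrm_poch_half (h : p % 4 = 3) (k : ℕ) : nrm p (poch (1/2) k) ≤ 1 :=
  nrm_prod_le_one p _ k fun j _ => nrm_half p h j

theorem nrm_four_shift (h : p % 4 = 3) {j : ℕ} (hj : j + 1 < p) :
    nrm p ((1 + j : ℚ) ^ 2 - ((p : ℚ) / 4) ^ 2) = 1 := by
  apply nrm_of_sub
  · rw [nrm_pow, nrm_succ p hj, one_pow]
  · rw [nrm_xsq p h]; exact e_lt p

theorem left_term (h : p % 4 = 3) {k : ℕ} (hk : k < p) :
    nrm p ((-1) ^ k * poch (-1/4) k ^ 3 / (k.factorial : ℚ) ^ 3 -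
      (-1) ^ k * poch (-1/4) k * poch (-1/4 + (p : ℚ) / 4) k * poch (-1/4 - (p : ℚ) / 4) k /
        ((k.factorial : ℚ) * poch (1 - (p : ℚ) / 4) k * poch (1 + (p : ℚ) / 4) k))
      ≤ (p : ℝ) ^ (-2 : ℤ) := by
  have e : (-1) ^ k * poch (-1/4) k ^ 3 / (k.factorial : ℚ) ^ 3 -
      (-1) ^ k * poch (-1/4) k * poch (-1/4 + (p : ℚ) / 4) k * poch (-1/4 - (p : ℚ) / 4) k /
        ((k.factorial : ℚ) * poch (1 - (p : ℚ) / 4) k * poch (1 + (p : ℚ) / 4) k)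
      = (-1) ^ k * poch (-1/4) k / (k.factorial : ℚ) *
        (∏ j ∈ range k, ((-1/4 + j : ℚ) ^ 2 / (1 + j : ℚ) ^ 2) -
         ∏ j ∈ range k, (((-1/4 + j : ℚ) ^ 2 - ((p : ℚ) / 4) ^ 2) / ((1 + j : ℚ) ^ 2 - ((p : ℚ) / 4) ^ 2))) := by
    rw [Finset.prod_div_distrib, Finset.prod_div_distrib, ← poch_mul_pm, ← poch_mul_pm,
      Finset.prod_pow, Finset.prod_pow, ← fact_eq, ← poch, mul_sub]
    congr 1
    · rw [div_mul_div_comm]; ring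
    · rw [div_mul_div_comm]; congr 1 <;> ring
  rw [e, nrm_mul]
  have h1 : nrm p ((-1) ^ k * poch (-1/4) k / (k.factorial : ℚ)) ≤ 1 := by
    rw [nrm_div, nrm_mul, nrm_pow, nrm_neg, nrm_one, one_pow, one_mul, nrm_fact p hk, div_one]
    exact nrm_poch_quarter p h k
  have hq : ∀ i : ℕ, nrm p ((-1/4 + i : ℚ) ^ 2) ≤ 1 := by
    intro i
    rw [nrm_pow]
    exact pow_le_one₀ (nrm_nonneg p _) (nrm_quarter p h i)
  have h2 : nrm p (∏ j ∈ range k, ((-1/4 + j : ℚ) ^ 2 / (1 + j : ℚ) ^ 2) -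
         ∏ j ∈ range k, (((-1/4 + j : ℚ) ^ 2 - ((p : ℚ) / 4) ^ 2) / ((1 + j : ℚ) ^ 2 - ((p : ℚ) / 4) ^ 2)))
         ≤ (p : ℝ) ^ (-2 : ℤ) := by
    apply nrm_prod_sub_le p _ _ (e_nonneg p)
    · intro i hi
      rw [nrm_div, nrm_pow p (1 + (i : ℚ)), nrm_succ p (by omega), one_pow, div_one]
      exact hq i
    · intro i hi
      rw [nrm_div, nrm_four_shift p h (by omega), div_one]
      apply nrm_sub_le p (hq i)
      rw [nrm_xsq p h]; exact (e_lt p).le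
    · intro i hi
      have n1 := nrm_succ p (j := i) (by omega)
      have n2 := nrm_four_shift p h (j := i) (by omega)
      have z1 : (1 + i : ℚ) ≠ 0 := by positivity
      have z2 : (1 + i : ℚ) ^ 2 - ((p : ℚ) / 4) ^ 2 ≠ 0 := by
        intro h0; rw [h0] at n2; simp [nrm] at n2
      have : (-1/4 + i : ℚ) ^ 2 / (1 + i : ℚ) ^ 2 -
          ((-1/4 + i : ℚ) ^ 2 - ((p : ℚ) / 4) ^ 2) / ((1 + i : ℚ) ^ 2 - ((p : ℚ) / 4) ^ 2)
          = ((p : ℚ) / 4) ^ 2 * ((1 + i : ℚ) ^ 2 - (-1/4 + i : ℚ) ^ 2) /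
            ((1 + i : ℚ) ^ 2 * ((1 + i : ℚ) ^ 2 - ((p : ℚ) / 4) ^ 2)) := by
        rw [div_sub_div _ _ (pow_ne_zero 2 z1) z2]
        congr 1; ring
      rw [this, nrm_div, nrm_mul, nrm_mul, n2, nrm_pow p (1 + (i : ℚ)), n1, one_pow, one_mul, div_one,
        nrm_xsq p h]
      apply mul_le_of_le_one_right (e_nonneg p)
      apply nrm_sub_le p _ (hq i)
      rw [nrm_pow, n1, one_pow]
  calc _ ≤ 1 * (p : ℝ) ^ (-2 : ℤ) := mul_le_mul h1 h2 (nrm_nonneg p _) zero_le_one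
    _ = _ := one_mul _

theorem nrm_poch_three (h : p % 4 = 3) {k : ℕ} (hk : 4 * k ≤ p + 1) :
    (p : ℝ)⁻¹ ≤ nrm p (poch (3/4) (2 * k)) := by
  unfold poch
  rw [nrm_prod]
  have hp0 : (0 : ℝ) < (p : ℝ)⁻¹ := by
    have : (0 : ℝ) < p := by exact_mod_cast (Fact.out : p.Prime).pos
    positivity
  calc (p : ℝ)⁻¹ ≤ ∏ i ∈ range (2 * k), (if i = (p - 3) / 4 then (p : ℝ)⁻¹ else 1) := by
        rw [Finset.prod_ite_eq']
        split_ifs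
        · exact le_rfl
        · exact (inv_p_lt p).le
    _ ≤ _ := by
        apply Finset.prod_le_prod
        · intro i _
          split_ifs
          · exact hp0.le
          · exact zero_le_one
        · intro i hi
          have hi' : i < 2 * k := by simpa using hi
          have e : nrm p (3/4 + i) = nrm p ((4 * i + 3 : ℕ) : ℚ) := by
            rw [show (3/4 + i : ℚ) = ((4 * i + 3 : ℕ) : ℚ) / 4 by push_cast; ring, nrm_div,
              nrm_four p h, div_one]
          rw [e]
          split_ifs with hip
          · rw [show 4 * i + 3 = p by omega, nrm_p]
          · rw [nrm_nat_eq]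
            rintro ⟨c, hc⟩
            have hc3 : c < 3 := by
              by_contra hc3
              have : p * 3 ≤ p * c := Nat.mul_le_mul_left p (by omega)
              omega
            interval_cases c <;> omega

theorem right_term (h : p % 4 = 3) {k : ℕ} (hk : 4 * k ≤ p + 1) :
    nrm p ((p : ℚ) * (poch (-1/4 + (p : ℚ) / 4) k * poch (-1/4 - (p : ℚ) / 4) k *
        (4 ^ k * poch (1/2) k / ((k.factorial : ℚ) * poch (3/4) (2 * k))) -
       poch (-1/4) k ^ 2 * poch (1/2) k / ((k.factorial : ℚ) * poch (3/8) k * poch (7/8) k)))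
      ≤ (p : ℝ) ^ (-2 : ℤ) := by
  have hkp : k < p := by omega
  have e : (p : ℚ) * (poch (-1/4 + (p : ℚ) / 4) k * poch (-1/4 - (p : ℚ) / 4) k *
        (4 ^ k * poch (1/2) k / ((k.factorial : ℚ) * poch (3/4) (2 * k))) -
       poch (-1/4) k ^ 2 * poch (1/2) k / ((k.factorial : ℚ) * poch (3/8) k * poch (7/8) k))
      = (p : ℚ) / poch (3/4) (2 * k) * (4 ^ k * poch (1/2) k / (k.factorial : ℚ)) *
        (∏ j ∈ range k, ((-1/4 + j : ℚ) ^ 2 - ((p : ℚ) / 4) ^ 2) - ∏ j ∈ range k, (-1/4 + j : ℚ) ^ 2) := by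
    rw [← poch_mul_pm, Finset.prod_pow, ← poch]
    have : poch (-1/4) k ^ 2 * poch (1/2) k / ((k.factorial : ℚ) * poch (3/8) k * poch (7/8) k)
      = poch (-1/4) k ^ 2 * (4 ^ k * poch (1/2) k) / ((k.factorial : ℚ) * poch (3/4) (2 * k)) := by
      rw [← poch_pair, show poch (-1/4) k ^ 2 * (4 ^ k * poch (1/2) k) =
        (poch (-1/4) k ^ 2 * poch (1/2) k) * 4 ^ k by ring, ← mul_assoc, mul_div_mul_right _ _ (by positivity),
        mul_assoc]
    rw [this]
    ring
  have h0 := nrm_poch_three p h hk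
  have hp0 : (0 : ℝ) < (p : ℝ)⁻¹ := by
    have : (0 : ℝ) < p := by exact_mod_cast (Fact.out : p.Prime).pos
    positivity
  have h1 : nrm p ((p : ℚ) / poch (3/4) (2 * k)) ≤ 1 := by
    rw [nrm_div, nrm_p]
    exact div_le_one_of_le₀ h0 (nrm_nonneg p _)
  have h2 : nrm p (4 ^ k * poch (1/2) k / (k.factorial : ℚ)) ≤ 1 := by
    rw [nrm_div, nrm_mul, nrm_pow, nrm_four p h, one_pow, one_mul, nrm_fact p hkp, div_one]
    exact nrm_poch_half p h k
  have hq : ∀ i : ℕ, nrm p ((-1/4 + i : ℚ) ^ 2) ≤ 1 := by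
    intro i
    rw [nrm_pow]
    exact pow_le_one₀ (nrm_nonneg p _) (nrm_quarter p h i)
  have h3 : nrm p (∏ j ∈ range k, ((-1/4 + j : ℚ) ^ 2 - ((p : ℚ) / 4) ^ 2) -
      ∏ j ∈ range k, (-1/4 + j : ℚ) ^ 2) ≤ (p : ℝ) ^ (-2 : ℤ) := by
    apply nrm_prod_sub_le p _ _ (e_nonneg p)
    · intro i hi
      apply nrm_sub_le p (hq i)
      rw [nrm_xsq p h]; exact (e_lt p).le
    · intro i hi
      exact hq i
    · intro i hi
      rw [sub_sub_cancel_left, nrm_neg, nrm_xsq p h]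
  rw [e, nrm_mul, nrm_mul]
  calc _ ≤ (1 * 1) * (p : ℝ) ^ (-2 : ℤ) :=
        mul_le_mul (mul_le_mul h1 h2 (nrm_nonneg p _) zero_le_one) h3 (nrm_nonneg p _) (by norm_num)
    _ = _ := by ring

end

theorem stmt13 (p : ℕ) [Fact p.Prime] (hp4 : p % 4 = 3) :
    ‖(((∑ k ∈ Finset.range ((p + 1) / 4 + 1),
          (-1 : ℚ) ^ k * poch (-1/4) k ^ 3 / ((k.factorial : ℚ)) ^ 3) -
        (-(-1 : ℚ) ^ ((p + 1) / 4) * p *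
          ∑ k ∈ Finset.range ((p + 1) / 4 + 1),
            poch (-1/4) k ^ 2 * poch (1/2) k /
              ((k.factorial : ℚ) * poch (3/8) k * poch (7/8) k)) : ℚ) : ℚ_[p])‖ ≤
      (p : ℝ) ^ (-2 : ℤ) := by
  obtain ⟨n, hn⟩ : ∃ n, (p + 1) / 4 = n := ⟨_, rfl⟩
  have hpn : p + 1 = 4 * n := by omega
  have hn1 : 1 ≤ n := by omega
  rw [hn]
  have hnx : (n : ℚ) = (p : ℚ) / 4 + 1 / 4 := by
    have : (p : ℚ) + 1 = 4 * n := by exact_mod_cast hpn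
    linarith
  have ha : ∀ k, poch (1 + -1/4) k ≠ 0 := by
    intro k
    apply ne_of_gt
    apply Finset.prod_pos
    intro i _
    have : (0 : ℚ) ≤ i := Nat.cast_nonneg i
    norm_num
    linarith
  have hd' : ∀ k, poch (1 - (p : ℚ) / 4) k ≠ 0 := by
    intro k
    unfold poch
    rw [Finset.prod_ne_zero_iff]
    intro i _ h0
    have h1 : (4 + 4 * i : ℚ) = p := by linarith
    have h2 : 4 + 4 * i = p := by exact_mod_cast h1
    omega
  have e1 : (1 + -1/4 - (-1/4 + (p : ℚ) / 4)) = 1 - (p : ℚ) / 4 := by ring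
  have key := main_id (-1/4) (-1/4 + (p : ℚ) / 4) ha (by rw [e1]; exact hd') n
  rw [e1, show (1 + -1/4 + (n : ℚ)) = 1 + (p : ℚ) / 4 by rw [hnx]; ring,
    show -(n : ℚ) = -1/4 - (p : ℚ) / 4 by rw [hnx]; ring,
    show (1 + -1/4 : ℚ) = 3/4 by norm_num, prefactor n hn1 _ hnx hd'] at key
  change nrm p _ ≤ _
  have split : ∀ S1 S2 U1 U2 : ℚ, U1 = -(-1) ^ n * (4 * ((p : ℚ) / 4)) * U2 →
      S1 - (-(-1) ^ n * p * S2) = (S1 - U1) + (-(-1) ^ n) * (p * (U2 - S2)) := by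
    intro S1 S2 U1 U2 hU
    rw [hU]; ring
  rw [split _ _ _ _ key]
  apply nrm_add_le
  · rw [← Finset.sum_sub_distrib]
    apply nrm_sum_le p _ (e_nonneg p)
    intro k hk
    exact left_term p hp4 (by omega)
  · rw [nrm_mul, nrm_neg, nrm_pow, nrm_neg, nrm_one, one_pow, one_mul, ← Finset.sum_sub_distrib,
      Finset.mul_sum]
    apply nrm_sum_le p _ (e_nonneg p)
    intro k hk
    exact right_term p hp4 (by omega)
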